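/- For every integer r ≥ 1, every integer i, and every integer n ≥ 1, the generalized cluster variables satisfy the three-term recurrence X(i, n+1) = X(i+n, 1) · X(i, n) − X(i, n-1) in ℚ(x_1,…,x_r), where X(i+n,1) = (x_{i+n+1} + x_{i+n-1})/x_{i+n}; consequently, for every n ≥ 1, X(i,n) lies in the ℤ-subalgebra of ℚ(x_1,…,x_r) generated by the elements X(j,1) = (x_{j+1}+x_{j-1})/x_j, 1 ≤ j ≤ r. -/

import Mathlib

/-- The ambient field `ℚ(x_1, …, x_r)`, realized as the fraction field of the
polynomial ring over `ℚ` in variables indexed by `ZMod r` (so indices are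
automatically read modulo `r`). -/
noncomputable abbrev CyclicField (r : ℕ) : Type :=
  FractionRing (MvPolynomial (ZMod r) ℚ)

/-- The variable `x_i` for `i : ℤ`, with `x_{i+r} = x_i`. -/
noncomputable def xv (r : ℕ) (i : ℤ) : CyclicField r :=
  algebraMap (MvPolynomial (ZMod r) ℚ) (CyclicField r) (MvPolynomial.X (i : ZMod r))

/-- The generalized cluster variable `X(l, n)` (the image of the indecomposable
nilpotent representation `E_l[n]` under the Caldero–Chapoton map):
`X(l,0) = 1` and, for `n ≥ 1`,
`X(l,n) = x_{l+n}/x_l + Σ_{k=1}^{n-1} (x_{l+n}·x_{l+r-1})/(x_{l+k-1}·x_{l+k}) + x_{l+r-1}/x_{l+n-1}`. -/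
noncomputable def Xgcv (r : ℕ) (l : ℤ) : ℕ → CyclicField r
  | 0 => 1
  | n + 1 =>
      xv r (l + n + 1) / xv r l
        + ∑ k ∈ Finset.Icc 1 n,
            (xv r (l + n + 1) * xv r (l + r - 1)) / (xv r (l + k - 1) * xv r (l + k))
        + xv r (l + r - 1) / xv r (l + n)

/-!
Since `x_{l+r-1} = x_{l-1}`, the defining expression of `X(l, n)` is the single sum
`x_{l-1} x_{l+n} Σ_{k=0}^{n} 1 / (x_{l+k-1} x_{l+k})`. The sequence `x` itself trivially solves
`u_{m+1} + u_{m-1} = ((x_{m+1} + x_{m-1}) / x_m) u_m`, and up to the constant `x_{l-1}` this sum is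
the second solution produced from `x` by reduction of order. The recurrence amounts to the
constancy of the Casoratian of the two solutions.
-/

section ThreeTermRecurrence

open Finset

variable {K : Type*} [Field K] {x : ℕ → K}

/-- The solution `n ↦ x n * Σ_{k < n} 1 / (x k * x (k + 1))`, obtained from `x` by reduction of
order, of the recurrence `u (n + 2) = (x (n + 2) + x n) / x (n + 1) * u (n + 1) - u n`. -/
def secondSolution (x : ℕ → K) (n : ℕ) : K :=
  x n * ∑ k ∈ range n, 1 / (x k * x (k + 1))

theorem casoratian_secondSolution (hx : ∀ n, x n ≠ 0) (n : ℕ) :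
    x n * secondSolution x (n + 1) - x (n + 1) * secondSolution x n = 1 := by
  have h0 := hx n
  have h1 := hx (n + 1)
  simp only [secondSolution, sum_range_succ]
  field_simp
  ring

theorem mul_secondSolution_one (hx : ∀ n, x n ≠ 0) : x 0 * secondSolution x 1 = 1 := by
  simpa [secondSolution] using casoratian_secondSolution hx 0

theorem secondSolution_add_two (hx : ∀ n, x n ≠ 0) (n : ℕ) :
    secondSolution x (n + 2) =
      (x (n + 2) + x n) / x (n + 1) * secondSolution x (n + 1) - secondSolution x n := by
  have h1 := hx (n + 1)
  field_simp
  linear_combination casoratian_secondSolution hx (n + 1) - casoratian_secondSolution hx n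

theorem mul_secondSolution_add_two (hx : ∀ n, x n ≠ 0) (n : ℕ) :
    x 0 * secondSolution x (n + 2) =
      x (n + 2) / x 1 + ∑ k ∈ Icc 1 n, x (n + 2) * x 0 / (x k * x (k + 1)) + x 0 / x (n + 1) := by
  have first_term : x (n + 2) * x 0 / (x 0 * x 1) = x (n + 2) / x 1 := by
    rw [mul_comm (x 0), mul_div_mul_right _ _ (hx 0)]
  have last_term : x (n + 2) * x 0 / (x (n + 1) * x (n + 2)) = x 0 / x (n + 1) := by
    rw [mul_comm (x (n + 2)), mul_div_mul_right _ _ (hx (n + 2))]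
  calc x 0 * secondSolution x (n + 2)
      = ∑ k ∈ range (n + 2), x (n + 2) * x 0 / (x k * x (k + 1)) := by
        rw [secondSolution, ← mul_assoc, mul_comm (x 0), mul_sum]
        simp only [mul_one_div]
    _ = x (n + 2) * x 0 / (x 0 * x 1) + ∑ k ∈ Icc 1 n, x (n + 2) * x 0 / (x k * x (k + 1))
          + x (n + 2) * x 0 / (x (n + 1) * x (n + 2)) := by
        rw [sum_range_succ, range_eq_Ico, sum_eq_sum_Ico_succ_bot (Nat.add_one_pos n), zero_add,
          Ico_add_one_right_eq_Icc]
    _ = _ := by rw [first_term, last_term]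

end ThreeTermRecurrence

theorem mem_of_three_term_recurrence {R σ : Type*} [Ring R] [SetLike σ R] [SubringClass σ R]
    {S : σ} {a u : ℕ → R} (hrec : ∀ n, u (n + 2) = a n * u (n + 1) - u n)
    (ha : ∀ n, a n ∈ S) (h0 : u 0 ∈ S) (h1 : u 1 ∈ S) (n : ℕ) : u n ∈ S := by
  induction n using Nat.twoStepInduction with
  | zero => exact h0
  | one => exact h1
  | more n ihn ihn' =>
    rw [hrec]
    exact sub_mem (mul_mem (ha n) ihn') ihn

theorem xv_ne_zero (r : ℕ) (i : ℤ) : xv r i ≠ 0 :=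
  (map_ne_zero_iff _ (IsFractionRing.injective _ _)).2 (MvPolynomial.X_ne_zero _)

theorem xv_periodic (r : ℕ) : Function.Periodic (xv r) r := fun i => by
  simp only [xv, Int.cast_add, Int.cast_natCast, CharP.cast_eq_zero, add_zero]

theorem xv_add_natCast_sub_one (r : ℕ) (l : ℤ) : xv r (l + r - 1) = xv r (l - 1) := by
  rw [add_sub_right_comm, xv_periodic r]

theorem Xgcv_one (r : ℕ) (l : ℤ) : Xgcv r l 1 = (xv r (l + 1) + xv r (l - 1)) / xv r l := by
  simp [Xgcv, xv_add_natCast_sub_one, add_div]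

theorem Xgcv_eq_mul_secondSolution (r : ℕ) (l : ℤ) (n : ℕ) :
    Xgcv r l n = xv r (l - 1) * secondSolution (fun k => xv r (l + k - 1)) (n + 1) := by
  have hx (k : ℕ) : xv r (l + k - 1) ≠ 0 := xv_ne_zero r _
  cases n with
  | zero => simpa [Xgcv] using (mul_secondSolution_one hx).symm
  | succ n =>
    have expansion := mul_secondSolution_add_two hx n
    simp only [Nat.cast_zero, Nat.cast_succ, add_zero, ← add_assoc, add_sub_cancel_right]
      at expansion
    rw [expansion, Xgcv, xv_add_natCast_sub_one]

theorem Xgcv_add_two (r : ℕ) (l : ℤ) (n : ℕ) :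
    Xgcv r l (n + 2) = Xgcv r (l + (n + 1 : ℕ)) 1 * Xgcv r l (n + 1) - Xgcv r l n := by
  have coefficient : Xgcv r (l + (n + 1 : ℕ)) 1 =
      (xv r (l + (n + 3 : ℕ) - 1) + xv r (l + (n + 1 : ℕ) - 1)) / xv r (l + (n + 2 : ℕ) - 1) := by
    simp only [Xgcv_one, Nat.cast_succ, ← add_assoc, add_sub_cancel_right]
  rw [coefficient]
  simp only [Xgcv_eq_mul_secondSolution]
  rw [secondSolution_add_two (fun _ => xv_ne_zero r _)]
  ring

theorem Xgcv_periodic (r n : ℕ) : Function.Periodic (fun l => Xgcv r l n) r := fun l => by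
  simp only [Xgcv_eq_mul_secondSolution, add_right_comm l (r : ℤ), xv_add_natCast_sub_one]

theorem Xgcv_mem_of_forall_Xgcv_one_mem {σ : Type*} {r : ℕ} [SetLike σ (CyclicField r)]
    [SubringClass σ (CyclicField r)] {S : σ} (hS : ∀ j, Xgcv r j 1 ∈ S) (l : ℤ) (n : ℕ) :
    Xgcv r l n ∈ S :=
  mem_of_three_term_recurrence (Xgcv_add_two r l) (fun _ => hS _) (one_mem S) (hS l) n

theorem exists_Xgcv_eq {r : ℕ} (hr : 1 ≤ r) (l : ℤ) (n : ℕ) :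
    ∃ j : ℤ, 1 ≤ j ∧ j ≤ r ∧ Xgcv r l n = Xgcv r j n := by
  obtain ⟨j, ⟨hj_pos, hj_le⟩, hj⟩ :=
    (Xgcv_periodic r n).exists_mem_Ioc (Int.natCast_pos.2 hr) l 0
  exact ⟨j, hj_pos, by rwa [zero_add] at hj_le, hj⟩

/-- the three-term recurrence
`X(i, n+1) = X(i+n, 1) · X(i, n) − X(i, n-1)` holds for all `r ≥ 1`, `i ∈ ℤ`, `n ≥ 1`,
with `X(i+n, 1) = (x_{i+n+1} + x_{i+n-1})/x_{i+n}`; consequently every `X(i, n)`, `n ≥ 1`,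
lies in the `ℤ`-subalgebra generated by the `X(j, 1)`, `1 ≤ j ≤ r`. -/
theorem stmt14 (r : ℕ) (hr : 1 ≤ r) (i : ℤ) (n : ℕ) (hn : 1 ≤ n) :
    Xgcv r i (n + 1) = Xgcv r (i + n) 1 * Xgcv r i n - Xgcv r i (n - 1) ∧
    Xgcv r (i + n) 1 = (xv r (i + n + 1) + xv r (i + n - 1)) / xv r (i + n) ∧
    Xgcv r i n ∈
      Algebra.adjoin ℤ {x : CyclicField r | ∃ j : ℤ, 1 ≤ j ∧ j ≤ (r : ℤ) ∧ x = Xgcv r j 1} := by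
  obtain ⟨m, rfl⟩ := Nat.exists_eq_add_of_le' hn
  refine ⟨Xgcv_add_two r i m, Xgcv_one r _, Xgcv_mem_of_forall_Xgcv_one_mem (fun j => ?_) i _⟩
  exact Algebra.subset_adjoin (exists_Xgcv_eq hr j 1)
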